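/- Let λ, σ, τ > 0 be real, p, q complex with Re(p) > 0, Re(q) > 0, η₂, η₃ complex with Re(η₃) > Re(η₂) > 0, and z any complex number. Then the extended confluent hypergeometric function satisfies Φ_{p,q}^{λ;σ,τ}(η₂; η₃; z) = (1 / B(η₂, η₃−η₂)) · ∫₀¹ t^{η₂-1} (1-t)^{η₃−η₂−1} e^{zt} E_λ(−p/t^σ) E_λ(−q/(1-t)^τ) dt. -/

import Mathlib

open MeasureTheory Set Complex

/-- The classical Mittag-Leffler function `E_λ(x) = Σ xⁿ / Γ(λn+1)`. -/
noncomputable def mlE (lam : ℝ) (x : ℂ) : ℂ :=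
  ∑' n : ℕ, x ^ n / Complex.Gamma (lam * n + 1)

/-- The extended beta function
`B_{p,q}^{λ;σ,τ}(η₁,η₂) = ∫₀¹ t^{η₁-1}(1-t)^{η₂-1} E_λ(-p/t^σ) E_λ(-q/(1-t)^τ) dt`. -/
noncomputable def extBeta (lam sig tau : ℝ) (p q e1 e2 : ℂ) : ℂ :=
  ∫ t in Ioo (0:ℝ) 1,
    (t : ℂ) ^ (e1 - 1) * (1 - (t : ℂ)) ^ (e2 - 1) *
      mlE lam (-p / (t : ℂ) ^ (sig : ℂ)) * mlE lam (-q / (1 - (t : ℂ)) ^ (tau : ℂ))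

/-- The extended confluent hypergeometric function
`Φ_{p,q}^{λ;σ,τ}(η₂;η₃;z) = Σ (B_{p,q}^{λ;σ,τ}(η₂+n,η₃-η₂)/B(η₂,η₃-η₂)) zⁿ/n!`. -/
noncomputable def extPhi (lam sig tau : ℝ) (p q e2 e3 z : ℂ) : ℂ :=
  ∑' n : ℕ,
    (extBeta lam sig tau p q (e2 + n) (e3 - e2) / Complex.betaIntegral e2 (e3 - e2)) *
    z ^ n / (Nat.factorial n : ℂ)


/-! Part 1: basic facts on the Mittag-Leffler function -/

theorem gamma_lower (x R : ℝ) (hx : 0 ≤ x) (hR : 0 < R) :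
    R ^ x * Real.exp (-R) ≤ Real.Gamma (x + 1) := by
  rw [Real.Gamma_eq_integral (by linarith)]
  have h1 : IntegrableOn (fun t : ℝ => Real.exp (-t) * t ^ (x + 1 - 1)) (Ioi 0) :=
    Real.GammaIntegral_convergent (by linarith)
  have h2 : ∫ t in Ioi R, Real.exp (-t) * t ^ (x + 1 - 1) ≤
      ∫ t in Ioi (0:ℝ), Real.exp (-t) * t ^ (x + 1 - 1) := by
    apply setIntegral_mono_set h1
    · filter_upwards [ae_restrict_mem measurableSet_Ioi] with t ht
      have : (0:ℝ) < t := ht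
      simp only [Pi.zero_apply]; positivity
    · exact (Ioi_subset_Ioi hR.le).eventuallyLE
  refine le_trans ?_ h2
  have h3 : ∫ t in Ioi R, Real.exp (-t) * R ^ x = R ^ x * Real.exp (-R) := by
    rw [integral_mul_const, integral_exp_neg_Ioi, mul_comm]
  rw [← h3]
  apply setIntegral_mono_on
  · exact (integrableOn_exp_neg_Ioi R).mul_const _
  · exact h1.mono_set (Ioi_subset_Ioi hR.le)
  · exact measurableSet_Ioi
  · intro t ht
    have : R < t := ht
    simp only [add_sub_cancel_right]
    gcongr

theorem gamma_norm (lam : ℝ) (hlam : 0 < lam) (n : ℕ) :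
    ‖Complex.Gamma (lam * n + 1)‖ = Real.Gamma (lam * n + 1) := by
  have : (lam * n + 1 : ℂ) = ((lam * n + 1 : ℝ) : ℂ) := by push_cast; rfl
  rw [this, Complex.Gamma_ofReal, Complex.norm_real, Real.norm_of_nonneg]
  exact (Real.Gamma_pos_of_pos (by positivity)).le

theorem term_bound (lam : ℝ) (hlam : 0 < lam) (R : ℝ) (hR : 0 < R) (z : ℂ) (n : ℕ) :
    ‖z ^ n / Complex.Gamma (lam * n + 1)‖ ≤ Real.exp R * (‖z‖ / R ^ lam) ^ n := by
  rw [norm_div, gamma_norm lam hlam, norm_pow]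
  have h := gamma_lower (lam * n) R (by positivity) hR
  have hpos : 0 < R ^ (lam * n) * Real.exp (-R) := by positivity
  calc ‖z‖ ^ n / Real.Gamma (lam * n + 1) ≤ ‖z‖ ^ n / (R ^ (lam * n) * Real.exp (-R)) := by
        gcongr
    _ = _ := by
        rw [Real.rpow_mul hR.le, Real.rpow_natCast, Real.exp_neg, div_pow]
        field_simp

theorem mlE_diff (lam : ℝ) (hlam : 0 < lam) : Differentiable ℂ (mlE lam) := by
  intro z
  have hd : DifferentiableOn ℂ (mlE lam) (Metric.ball 0 (‖z‖ + 1)) := by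
    set R : ℝ := (2 * (‖z‖ + 1)) ^ (1 / lam) with hRdef
    have hR : 0 < R := by positivity
    have hRl : R ^ lam = 2 * (‖z‖ + 1) := by
      rw [hRdef, ← Real.rpow_mul (by positivity)]; field_simp; simp
    refine Complex.differentiableOn_tsum_of_summable_norm (u := fun n => Real.exp R * (1 / 2) ^ n)
      (summable_geometric_two.mul_left _) (fun n => ?_) Metric.isOpen_ball (fun n w hw => ?_)
    · fun_prop
    · refine (term_bound lam hlam R hR w n).trans ?_
      have hw' : ‖w‖ < ‖z‖ + 1 := by simpa using hw
      have h12 : ‖w‖ / R ^ lam ≤ 1 / 2 := by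
        rw [hRl, div_le_iff₀ (by positivity)]; linarith
      gcongr
  exact hd.differentiableAt (Metric.isOpen_ball.mem_nhds (by simp))

theorem mlE_zero (lam : ℝ) : mlE lam 0 = 1 := by
  unfold mlE
  rw [tsum_eq_single 0]
  · simp
  · intro n hn; simp [hn]

/-- the function u ↦ E(c u^lam) -/
noncomputable def mly (lam : ℝ) (c : ℂ) (u : ℝ) : ℂ := mlE lam (c * ((u ^ lam : ℝ) : ℂ))

noncomputable def mlA (lam : ℝ) (c : ℂ) : ℝ := (2 * ‖c‖) ^ (1 / lam)

theorem mlA_pow (lam : ℝ) (hlam : 0 < lam) (c : ℂ) : mlA lam c ^ lam = 2 * ‖c‖ := by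
  rw [mlA, ← Real.rpow_mul (by positivity)]; field_simp; simp

theorem mly_bound (lam : ℝ) (hlam : 0 < lam) (c : ℂ) (hc : c ≠ 0) (u : ℝ) (hu : 0 < u) :
    ‖mly lam c u‖ ≤ 2 * Real.exp (mlA lam c * u) := by
  have hc' : 0 < ‖c‖ := norm_pos_iff.2 hc
  have hA : 0 < mlA lam c := by unfold mlA; positivity
  have h : ∀ n : ℕ, ‖(c * ((u ^ lam : ℝ) : ℂ)) ^ n / Complex.Gamma (lam * n + 1)‖ ≤
      Real.exp (mlA lam c * u) * (1 / 2) ^ n := by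
    intro n
    have := term_bound lam hlam (mlA lam c * u) (by positivity) (c * ((u ^ lam : ℝ) : ℂ)) n
    refine this.trans (le_of_eq ?_)
    rw [Real.mul_rpow hA.le hu.le, mlA_pow lam hlam, norm_mul, Complex.norm_real,
      Real.norm_of_nonneg (by positivity)]
    congr 2
    field_simp
  have := tsum_of_norm_bounded (hasSum_geometric_two.mul_left (Real.exp (mlA lam c * u))) h
  rw [mul_comm]
  exact this

theorem mly_contOn (lam : ℝ) (hlam : 0 < lam) (c : ℂ) : Continuous (mly lam c) := by
  unfold mly
  have h1 := (mlE_diff lam hlam).continuous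
  have h2 : Continuous (fun u : ℝ => u ^ lam) := Real.continuous_rpow_const hlam.le
  fun_prop

theorem mly_exp_int (lam : ℝ) (hlam : 0 < lam) (c : ℂ) (hc : c ≠ 0) (s : ℂ)
    (hs : mlA lam c < s.re) :
    IntegrableOn (fun u : ℝ => Complex.exp (-(s * u)) * mly lam c u) (Ioi 0) := by
  have h1 : IntegrableOn (fun u : ℝ => 2 * Real.exp ((mlA lam c - s.re) * u)) (Ioi 0) :=
    (integrableOn_exp_mul_Ioi (by linarith) 0).const_mul 2
  refine Integrable.mono' h1 ?_ ?_
  · have := mly_contOn lam hlam c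
    exact Continuous.aestronglyMeasurable (by fun_prop)
  · filter_upwards [ae_restrict_mem measurableSet_Ioi] with u hu
    rw [norm_mul, Complex.norm_exp]
    calc _ ≤ Real.exp (-(s * u)).re * (2 * Real.exp (mlA lam c * u)) := by
          gcongr; exact mly_bound lam hlam c hc u hu
      _ = _ := by
          rw [mul_left_comm, ← Real.exp_add]; congr 2; simp; ring


theorem mly_laplace_real (lam : ℝ) (hlam : 0 < lam) (c : ℂ) (hc : c ≠ 0) (s : ℝ)
    (hs : mlA lam c < s) :
    (∫ u in Ioi (0:ℝ), Complex.exp (-((s:ℂ) * u)) * mly lam c u) * ((s:ℂ) ^ (lam : ℂ) - c) =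
      (s:ℂ) ^ ((lam : ℂ) - 1) := by
  have hc' : 0 < ‖c‖ := norm_pos_iff.2 hc
  have hA : 0 < mlA lam c := by unfold mlA; positivity
  have hs0 : 0 < s := hA.trans hs
  have hsne : (s:ℂ) ≠ 0 := by exact_mod_cast hs0.ne'
  have hq : ‖c‖ / s ^ lam < 1 / 2 := by
    have : mlA lam c ^ lam < s ^ lam := Real.rpow_lt_rpow hA.le hs hlam
    rw [mlA_pow lam hlam] at this
    rw [div_lt_iff₀ (by positivity)]; linarith
  have hG : ∀ n : ℕ, 0 < Real.Gamma (lam * n + 1) := fun n => Real.Gamma_pos_of_pos (by positivity)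
  have key : ∀ n : ℕ, ∫ u in Ioi (0:ℝ), u ^ (lam * n) * Real.exp (-(s * u)) =
      s⁻¹ * ((s ^ lam)⁻¹) ^ n * Real.Gamma (lam * n + 1) := by
    intro n
    have := Real.integral_rpow_mul_exp_neg_mul_Ioi (a := lam * n + 1) (r := s) (by positivity) hs0
    simp only [add_sub_cancel_right] at this
    rw [this]
    congr 1
    rw [one_div, Real.rpow_add (by positivity), Real.rpow_one, Real.rpow_mul (by positivity),
      Real.rpow_natCast, Real.inv_rpow hs0.le, mul_comm]
  have keyi : ∀ n : ℕ, IntegrableOn (fun u : ℝ => u ^ (lam * n) * Real.exp (-(s * u))) (Ioi 0) := by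
    intro n
    by_contra h
    have h2 := key n
    rw [integral_undef h] at h2
    have := hG n
    have : 0 < s⁻¹ * ((s ^ lam)⁻¹) ^ n * Real.Gamma (lam * n + 1) := by positivity
    linarith
  let F : ℕ → ℝ → ℂ := fun n u => (c ^ n / Complex.Gamma (lam * n + 1)) *
    ((u ^ (lam * n) * Real.exp (-(s * u)) : ℝ) : ℂ)
  have hFi : ∀ n, Integrable (F n) (volume.restrict (Ioi 0)) := fun n =>
    ((keyi n).ofReal).const_mul _
  have hFint : ∀ n, ∫ u in Ioi (0:ℝ), F n u = (s:ℂ)⁻¹ * (c / (s ^ lam : ℝ)) ^ n := by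
    intro n
    simp only [F]
    rw [integral_const_mul, integral_complex_ofReal, key]
    have h1 : Complex.Gamma (lam * n + 1) = (Real.Gamma (lam * n + 1) : ℂ) := by
      rw [← Complex.Gamma_ofReal]; push_cast; rfl
    have h2 : (Real.Gamma (lam * n + 1) : ℂ) ≠ 0 := by exact_mod_cast (hG n).ne'
    rw [h1]
    push_cast
    rw [div_pow, inv_pow]
    field_simp
  have hFn : ∀ n, ∫ u in Ioi (0:ℝ), ‖F n u‖ = s⁻¹ * (‖c‖ / s ^ lam) ^ n := by
    intro n
    have : ∀ u ∈ Ioi (0:ℝ), ‖F n u‖ = (‖c‖ ^ n / Real.Gamma (lam * n + 1)) *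
        (u ^ (lam * n) * Real.exp (-(s * u))) := by
      intro u hu
      have hu' : (0:ℝ) < u := hu
      simp only [F]
      rw [norm_mul, norm_div, gamma_norm lam hlam, norm_pow, Complex.norm_real,
        Real.norm_of_nonneg (by positivity)]
    rw [setIntegral_congr_fun measurableSet_Ioi this, integral_const_mul, key]
    have := (hG n).ne'
    rw [div_pow, inv_pow]
    field_simp
  have hsum := hasSum_integral_of_summable_integral_norm hFi (by
    simp only [hFn]
    exact (summable_geometric_of_lt_one (by positivity) (by linarith)).mul_left _)
  simp only [hFint] at hsum
  have hlt : ‖c / (s ^ lam : ℝ)‖ < 1 := by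
    rw [norm_div, Complex.norm_real, Real.norm_of_nonneg (by positivity)]; linarith
  have hsum2 := (hasSum_geometric_of_norm_lt_one hlt).mul_left (s:ℂ)⁻¹
  have heq := hsum.unique hsum2
  have hcongr : ∫ u in Ioi (0:ℝ), Complex.exp (-((s:ℂ) * u)) * mly lam c u =
      ∫ u in Ioi (0:ℝ), ∑' n, F n u := by
    apply setIntegral_congr_fun measurableSet_Ioi
    intro u hu
    have hu' : (0:ℝ) < u := hu
    simp only [mly, mlE, F]
    rw [← tsum_mul_left]
    congr 1
    ext n
    rw [Real.rpow_mul hu'.le, Real.rpow_natCast]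
    push_cast
    ring
  rw [hcongr, heq]
  have e1 : (s:ℂ) ^ (lam:ℂ) = (s ^ lam : ℝ) := by rw [Complex.ofReal_cpow hs0.le]
  rw [Complex.cpow_sub _ _ hsne, e1, Complex.cpow_one]
  have e2 : ((s ^ lam : ℝ) : ℂ) ≠ 0 := by exact_mod_cast (by positivity : s ^ lam ≠ 0)
  have e3 : ((s ^ lam : ℝ) : ℂ) - c ≠ 0 := by
    intro h
    have : ‖c / (s ^ lam : ℝ)‖ = 1 := by
      rw [← sub_eq_zero.1 h, div_self e2]; simp
    linarith
  have e4 : 1 - c / ((s ^ lam : ℝ) : ℂ) ≠ 0 := by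
    intro h; apply e3; field_simp at h; simpa using h
  field_simp

theorem laplace_diff (g : ℝ → ℂ) (hg : Continuous g) (a : ℝ)
    (hInt : ∀ x : ℝ, a < x → IntegrableOn (fun u : ℝ => Complex.exp (-((x:ℂ) * u)) * g u) (Ioi 0)) :
    DifferentiableOn ℂ (fun s : ℂ => ∫ u in Ioi (0:ℝ), Complex.exp (-(s * u)) * g u) {s | a < s.re} := by
  intro s hs
  have hs' : a < s.re := hs
  apply DifferentiableAt.differentiableWithinAt
  set d : ℝ := (s.re - a) / 3 with hd
  have hdpos : 0 < d := by rw [hd]; linarith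
  have hnorm : ∀ (w : ℂ) (u : ℝ), ‖Complex.exp (-(w * u)) * g u‖ = Real.exp (-(w.re * u)) * ‖g u‖ := by
    intro w u; rw [norm_mul, Complex.norm_exp]; simp
  have hcont : ∀ w : ℂ, Continuous (fun u : ℝ => Complex.exp (-(w * u)) * g u) := by
    intro w; fun_prop
  have h0 : Integrable (fun u : ℝ => Real.exp (-((a + d) * u)) * ‖g u‖) (volume.restrict (Ioi 0)) := by
    have := (hInt (a + d) (by linarith)).norm
    refine this.congr (ae_of_all _ fun u => ?_)
    simp only
    rw [hnorm]; simp
  have := hasDerivAt_integral_of_dominated_loc_of_deriv_le (μ := volume.restrict (Ioi (0:ℝ)))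
    (F := fun (s : ℂ) (u : ℝ) => Complex.exp (-(s * u)) * g u)
    (F' := fun (s : ℂ) (u : ℝ) => -u * Complex.exp (-(s * u)) * g u)
    (bound := fun u => (1 / d) * (Real.exp (-((a + d) * u)) * ‖g u‖)) (x₀ := s)
    (s := Metric.ball s d) (Metric.ball_mem_nhds _ hdpos)
    (Filter.Eventually.of_forall fun w => (hcont w).aestronglyMeasurable) ?_ ?_ ?_ ?_ ?_
  · exact this.2.differentiableAt
  · refine Integrable.mono' h0 (hcont s).aestronglyMeasurable ?_
    filter_upwards [ae_restrict_mem measurableSet_Ioi] with u hu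
    have hu' : (0:ℝ) < u := hu
    rw [hnorm]
    gcongr
    linarith
  · exact Continuous.aestronglyMeasurable (by fun_prop)
  · filter_upwards [ae_restrict_mem measurableSet_Ioi] with u hu w hw
    have hu' : (0:ℝ) < u := hu
    have hw1 : a + 2 * d ≤ w.re := by
      have h1 : ‖w - s‖ < d := by simpa [dist_eq_norm] using hw
      have h2 := (Complex.abs_re_le_norm (w - s)).trans h1.le
      rw [abs_le, Complex.sub_re] at h2
      linarith [h2.1]
    rw [mul_assoc, norm_mul, hnorm]
    have h3 : ‖-(u:ℂ)‖ ≤ (1 / d) * Real.exp (d * u) := by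
      rw [norm_neg, Complex.norm_real, Real.norm_of_nonneg hu'.le, one_div, ← div_eq_inv_mul,
        le_div_iff₀ hdpos]
      linarith [Real.add_one_le_exp (d * u)]
    calc _ ≤ (1 / d) * Real.exp (d * u) * (Real.exp (-((a + 2 * d) * u)) * ‖g u‖) := by gcongr
      _ = (1 / d) * ((Real.exp (d * u) * Real.exp (-((a + 2 * d) * u))) * ‖g u‖) := by ring
      _ = _ := by rw [← Real.exp_add]; ring_nf
  · exact h0.const_mul _
  · refine ae_of_all _ fun u w _ => ?_
    have h1 : HasDerivAt (fun w : ℂ => -(w * u)) (-(1 * (u:ℂ))) w := ((hasDerivAt_id w).mul_const _).neg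
    have := (h1.cexp).mul_const (g u)
    refine this.congr_deriv ?_
    ring

theorem mly_laplace (lam : ℝ) (hlam : 0 < lam) (c : ℂ) (hc : c ≠ 0) (a : ℝ) (ha : 0 ≤ a)
    (hInt : ∀ x : ℝ, a < x →
      IntegrableOn (fun u : ℝ => Complex.exp (-((x:ℂ) * u)) * mly lam c u) (Ioi 0))
    (s : ℂ) (hs : a < s.re) :
    (∫ u in Ioi (0:ℝ), Complex.exp (-(s * u)) * mly lam c u) * (s ^ (lam : ℂ) - c) =
      s ^ ((lam : ℂ) - 1) := by
  have hopen : IsOpen {s : ℂ | a < s.re} := isOpen_lt continuous_const Complex.continuous_re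
  have hslit : ∀ s ∈ {s : ℂ | a < s.re}, s ∈ Complex.slitPlane := fun s hs =>
    Or.inl (ha.trans_lt hs)
  have hpow : ∀ b : ℂ, DifferentiableOn ℂ (fun s : ℂ => s ^ b) {s : ℂ | a < s.re} := fun b s hs =>
    (differentiableAt_id.cpow_const (hslit s hs)).differentiableWithinAt
  have h1 := (((laplace_diff _ (mly_contOn lam hlam c) a hInt).mul
    ((hpow lam).sub (differentiableOn_const c))).analyticOnNhd hopen)
  have h2 := (hpow (lam - 1)).analyticOnNhd hopen
  set M : ℝ := max a (mlA lam c) + 1 with hM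
  have hMa : a < M := by rw [hM]; linarith [le_max_left a (mlA lam c)]
  have hMA : mlA lam c < M := by rw [hM]; linarith [le_max_right a (mlA lam c)]
  refine AnalyticOnNhd.eqOn_of_preconnected_of_frequently_eq h1 h2
    (convex_halfSpace_re_gt a).isPreconnected (z₀ := (M : ℂ)) (by simpa using hMa) ?_ hs
  have htend : Filter.Tendsto (fun x : ℝ => (x : ℂ)) (nhdsWithin M (Ioi M)) (nhdsWithin (M:ℂ) {(M:ℂ)}ᶜ) := by
    refine tendsto_nhdsWithin_iff.2 ⟨?_, ?_⟩
    · exact (Complex.continuous_ofReal.tendsto M).mono_left nhdsWithin_le_nhds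
    · filter_upwards [self_mem_nhdsWithin] with x hx
      have : M < x := hx
      simp only [mem_compl_iff, mem_singleton_iff]
      exact_mod_cast this.ne'
  refine htend.frequently (Filter.Eventually.frequently ?_)
  filter_upwards [self_mem_nhdsWithin] with x hx
  exact mly_laplace_real lam hlam c hc x (hMA.trans hx)

/-- the growing case -/
theorem mly_bad (lam : ℝ) (hlam : 0 < lam) (c : ℂ) (hc : c ≠ 0) (s1 : ℂ) (hs1 : 0 < s1.re)
    (hs1c : s1 ^ (lam : ℂ) = c) (N b : ℝ) (hb : 0 < b)
    (h : IntegrableOn (fun u : ℝ => u ^ (-N) * ‖mly lam c u‖) (Ioi b)) : False := by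
  have hInt : ∀ x : ℝ, 0 < x →
      IntegrableOn (fun u : ℝ => Complex.exp (-((x:ℂ) * u)) * mly lam c u) (Ioi 0) := by
    intro x hx
    have hcont : Continuous (fun u : ℝ => Complex.exp (-((x:ℂ) * u)) * mly lam c u) := by
      have := mly_contOn lam hlam c
      fun_prop
    rw [← Ioc_union_Ioi_eq_Ioi hb.le]
    refine IntegrableOn.union ?_ ?_
    · exact (hcont.integrableOn_Icc (a := 0) (b := b)).mono_set Ioc_subset_Icc_self
    · have hbig : Filter.Tendsto (fun u : ℝ => u ^ N * Real.exp (-x * u)) Filter.atTop (nhds 0) :=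
        tendsto_rpow_mul_exp_neg_mul_atTop_nhds_zero N x hx
      have hev : ∀ᶠ u in Filter.atTop, u ^ N * Real.exp (-x * u) ≤ 1 :=
        (hbig.eventually_lt_const one_pos).mono fun _ h => h.le
      obtain ⟨T, hT⟩ := Filter.eventually_atTop.1 hev
      have hT' : IntegrableOn (fun u : ℝ => Complex.exp (-((x:ℂ) * u)) * mly lam c u) (Ioi (max b T)) := by
        refine Integrable.mono' (h.mono_set (Ioi_subset_Ioi (le_max_left b T)))
          hcont.aestronglyMeasurable ?_
        filter_upwards [ae_restrict_mem measurableSet_Ioi] with u hu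
        have hu1 : max b T < u := hu
        have hu0 : 0 < u := hb.trans ((le_max_left b T).trans_lt hu1)
        have := hT u ((le_max_right b T).trans hu1.le)
        rw [norm_mul, Complex.norm_exp]
        gcongr
        rw [Real.rpow_neg hu0.le, ← one_div, le_div_iff₀ (by positivity)]
        simpa [mul_comm] using this
      rw [← Ioc_union_Ioi_eq_Ioi (le_max_left b T)]
      exact IntegrableOn.union ((hcont.integrableOn_Icc).mono_set Ioc_subset_Icc_self) hT'
  have := mly_laplace lam hlam c hc 0 le_rfl hInt s1 hs1
  rw [hs1c, sub_self, mul_zero] at this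
  have hne : s1 ≠ 0 := by rintro rfl; simp at hs1
  exact (Complex.cpow_ne_zero_iff_of_exponent_ne_zero (x := s1) (y := (lam:ℂ) - 1) (by
    intro h0; rw [h0, Complex.cpow_zero] at this; simp at this)).2 hne this.symm

/-! Part 2: bounds on the transform -/

noncomputable def Hf (lam : ℝ) (c s : ℂ) : ℂ :=
  (s ^ ((lam:ℂ) - 1) + c) / ((s ^ (lam:ℂ) - c) * (s + 1))

/-- no zero of `s^lam - c` in the open right half plane, simple poles on the boundary -/
def HP (lam : ℝ) (c : ℂ) (K w0 : ℝ) : Prop :=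
  ∀ s : ℂ, 0 < s.re → s ^ (lam:ℂ) ≠ c ∧
    ‖s ^ (lam:ℂ) - c‖⁻¹ ≤ K * (1 + (‖s - w0 * I‖⁻¹ + ‖s + w0 * I‖⁻¹))

theorem norm_pow1 (lam : ℝ) (s : ℂ) : ‖s ^ ((lam:ℂ) - 1)‖ = ‖s‖ ^ (lam - 1) := by
  have : (lam:ℂ) - 1 = ((lam - 1 : ℝ) : ℂ) := by push_cast; rfl
  rw [this, Complex.norm_cpow_real]

theorem norm_add_one (s : ℂ) (hs : 0 < s.re) : ‖s‖ ≤ ‖s + 1‖ ∧ 1 ≤ ‖s + 1‖ := by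
  constructor
  · rw [Complex.norm_def, Complex.norm_def]
    apply Real.sqrt_le_sqrt
    simp only [Complex.normSq_apply, Complex.add_re, Complex.add_im, Complex.one_re, Complex.one_im]
    nlinarith
  · have := Complex.re_le_norm (s + 1)
    simp only [Complex.add_re, Complex.one_re] at this
    linarith

theorem Hf_far (lam : ℝ) (hlam : 0 < lam) (c : ℂ) :
    ∃ R C : ℝ, 1 ≤ R ∧ 0 ≤ C ∧ ∀ s : ℂ, 0 < s.re → R ≤ ‖s‖ →
      ‖Hf lam c s‖ ≤ C * ‖s‖ ^ (-(1 + min 1 lam)) := by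
  refine ⟨max 1 (mlA lam c), 2 * (1 + ‖c‖), le_max_left _ _, by positivity, ?_⟩
  intro s hs hR
  have h1 : 1 ≤ ‖s‖ := (le_max_left _ _).trans hR
  have h0 : 0 < ‖s‖ := by linarith
  have hA0 : 0 ≤ mlA lam c := by unfold mlA; positivity
  have h2 : 2 * ‖c‖ ≤ ‖s‖ ^ lam := by
    rw [← mlA_pow lam hlam]
    exact Real.rpow_le_rpow hA0 ((le_max_right _ _).trans hR) hlam.le
  have h3 : ‖s‖ ^ lam / 2 ≤ ‖s ^ (lam:ℂ) - c‖ := by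
    have := norm_sub_norm_le (s ^ (lam:ℂ)) c
    rw [Complex.norm_cpow_real] at this
    linarith
  unfold Hf
  rw [norm_div, norm_mul]
  calc _ ≤ (‖s‖ ^ (lam - 1) + ‖c‖) / ((‖s‖ ^ lam / 2) * ‖s‖) := by
        gcongr
        · exact (norm_add_le _ _).trans (by rw [norm_pow1])
        · exact (norm_add_one s hs).1
    _ = 2 * ‖s‖ ^ (-2 : ℝ) + 2 * ‖c‖ * ‖s‖ ^ (-(1 + lam)) := by
        rw [Real.rpow_sub h0, Real.rpow_one, Real.rpow_neg h0.le, Real.rpow_neg h0.le,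
          Real.rpow_add h0, Real.rpow_one, Real.rpow_two]
        have : 0 < ‖s‖ ^ lam := by positivity
        field_simp
    _ ≤ 2 * ‖s‖ ^ (-(1 + min 1 lam)) + 2 * ‖c‖ * ‖s‖ ^ (-(1 + min 1 lam)) := by
        gcongr 2 * ?_ + 2 * ‖c‖ * ?_
        · exact Real.rpow_le_rpow_of_exponent_le h1 (by linarith [min_le_left 1 lam])
        · exact Real.rpow_le_rpow_of_exponent_le h1 (by linarith [min_le_right 1 lam])
    _ = _ := by ring

theorem rpow_between (a r R x : ℝ) (hr : 0 < r) (hx : r ≤ x) (hxR : x ≤ R) :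
    x ^ a ≤ r ^ a + R ^ a := by
  have hx0 : 0 < x := by linarith
  have hR0 : 0 < R := by linarith
  rcases le_total 0 a with h | h
  · have := Real.rpow_le_rpow hx0.le hxR h
    have : 0 < r ^ a := by positivity
    linarith
  · have := Real.rpow_le_rpow_of_nonpos hr hx h
    have : 0 < R ^ a := by positivity
    linarith

theorem Hf_near (lam : ℝ) (hlam : 0 < lam) (c : ℂ) (hc : c ≠ 0) (K w0 : ℝ) (hP : HP lam c K w0)
    (R : ℝ) (hR : 0 < R) : ∃ C : ℝ, 0 ≤ C ∧ ∀ s : ℂ, 0 < s.re → s.im ≠ 0 → ‖s‖ ≤ R →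
      ‖Hf lam c s‖ ≤ C * (1 + |s.im| ^ (lam - 1) + (‖s - w0 * I‖⁻¹ + ‖s + w0 * I‖⁻¹)) := by
  have hc' : 0 < ‖c‖ := norm_pos_iff.2 hc
  have hK : 0 ≤ K := by
    have h := (hP 1 (by simp)).2
    have h1 : 0 ≤ K * (1 + (‖(1:ℂ) - w0 * I‖⁻¹ + ‖(1:ℂ) + w0 * I‖⁻¹)) := le_trans (by positivity) h
    by_contra hneg
    have : 0 < 1 + (‖(1:ℂ) - w0 * I‖⁻¹ + ‖(1:ℂ) + w0 * I‖⁻¹) := by positivity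
    nlinarith
  set r1 : ℝ := (‖c‖ / 2) ^ (1 / lam) with hr1
  have hr1pos : 0 < r1 := by positivity
  have hr1l : r1 ^ lam = ‖c‖ / 2 := by
    rw [hr1, ← Real.rpow_mul (by positivity), one_div_mul_cancel hlam.ne', Real.rpow_one]
  set Q : ℝ := r1 ^ (lam - 1) + R ^ (lam - 1) + ‖c‖ with hQ
  have hQpos : 0 < Q := by positivity
  refine ⟨(2 / ‖c‖) * (1 + R ^ (lam - 1) + ‖c‖) + Q * K, by positivity, ?_⟩
  intro s hs him hsR
  set P := ‖s - w0 * I‖⁻¹ + ‖s + w0 * I‖⁻¹ with hPdef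
  have hPnn : 0 ≤ P := by positivity
  have him' : 0 < |s.im| := abs_pos.2 him
  have himn : |s.im| ≤ ‖s‖ := Complex.abs_im_le_norm s
  have hIp : 0 < |s.im| ^ (lam - 1) := by positivity
  have hRp : 0 < R ^ (lam - 1) := by positivity
  have hs0 : 0 < ‖s‖ := by linarith
  have hbase : ‖Hf lam c s‖ ≤ (‖s‖ ^ (lam - 1) + ‖c‖) * ‖s ^ (lam:ℂ) - c‖⁻¹ := by
    unfold Hf
    rw [norm_div, norm_mul, div_eq_mul_inv, mul_inv]
    have h1 : ‖s ^ ((lam:ℂ) - 1) + c‖ ≤ ‖s‖ ^ (lam - 1) + ‖c‖ :=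
      (norm_add_le _ _).trans (by rw [norm_pow1])
    have h2 : ‖s + 1‖⁻¹ ≤ 1 := inv_le_one_of_one_le₀ (norm_add_one s hs).2
    calc _ ≤ (‖s‖ ^ (lam - 1) + ‖c‖) * (‖s ^ (lam:ℂ) - c‖⁻¹ * 1) := by gcongr
      _ = _ := by rw [mul_one]
  refine hbase.trans ?_
  rcases le_total ‖s‖ r1 with h | h
  · have h3 : ‖c‖ / 2 ≤ ‖s ^ (lam:ℂ) - c‖ := by
      have h4 := norm_sub_norm_le c (s ^ (lam:ℂ))
      rw [Complex.norm_cpow_real, norm_sub_rev] at h4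
      have := Real.rpow_le_rpow hs0.le h hlam.le
      rw [hr1l] at this
      linarith
    have h5 : ‖s ^ (lam:ℂ) - c‖⁻¹ ≤ 2 / ‖c‖ := by
      rw [← inv_div]; exact inv_anti₀ (by positivity) h3
    have h6 := rpow_between (lam - 1) _ _ _ him' himn hsR
    calc _ ≤ ((|s.im| ^ (lam - 1) + R ^ (lam - 1)) + ‖c‖) * (2 / ‖c‖) := by gcongr
      _ = (2 / ‖c‖) * (|s.im| ^ (lam - 1) + R ^ (lam - 1) + ‖c‖) := by ring
      _ ≤ (2 / ‖c‖) * ((1 + R ^ (lam - 1) + ‖c‖) * (1 + |s.im| ^ (lam - 1) + P)) := by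
        gcongr
        nlinarith [mul_nonneg hRp.le hIp.le, mul_nonneg hRp.le hPnn, mul_nonneg hc'.le hIp.le,
          mul_nonneg hc'.le hPnn]
      _ ≤ _ := by
        rw [← mul_assoc, add_mul _ (Q * K)]
        have : 0 ≤ Q * K * (1 + |s.im| ^ (lam - 1) + P) := by positivity
        linarith
  · have h6 := rpow_between (lam - 1) _ _ _ hr1pos h hsR
    calc _ ≤ Q * (K * (1 + P)) := by
          gcongr
          · rw [hQ]; linarith
          · exact (hP s hs).2
      _ ≤ Q * K * (1 + |s.im| ^ (lam - 1) + P) := by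
          rw [← mul_assoc]; gcongr; linarith
      _ ≤ _ := by
        rw [add_mul]
        have : 0 ≤ (2 / ‖c‖) * (1 + R ^ (lam - 1) + ‖c‖) * (1 + |s.im| ^ (lam - 1) + P) := by positivity
        linarith

theorem abs_rpow_locint (a R w : ℝ) (ha : -1 < a) :
    IntegrableOn (fun x : ℝ => |x - w| ^ a) (Icc (-R) R) := by
  have h : LocallyIntegrable (fun x : ℝ => |x| ^ a) := by
    refine locallyIntegrable_of_norm_le_rpow (C := 1) (α := -a) (by simp) (by simp; linarith) ?_ ?_
    · refine ae_of_all _ fun x => ?_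
      simp only [neg_neg, one_mul, Real.norm_eq_abs]
      rw [abs_of_nonneg (by positivity)]
    · exact (measurable_id.abs.pow_const a).aestronglyMeasurable
  have h2 := h.integrableOn_isCompact (isCompact_Icc (a := -R - w) (b := R - w))
  have h3 := (measurePreserving_sub_right volume w).integrableOn_comp_preimage
    (MeasurableEquiv.subRight w).measurableEmbedding (f := fun x : ℝ => |x| ^ a)
    (s := Icc (-R - w) (R - w))
  have h4 := h3.2 h2
  simp only [preimage_sub_const_Icc, sub_add_cancel] at h4
  exact h4

theorem pole_bound (s : ℂ) (w e : ℝ) (he : 0 < e) (he1 : e < 1) (hs : 0 < s.re) (hw : s.im - w ≠ 0) :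
    ‖s - w * I‖⁻¹ ≤ s.re ^ (-e) * |s.im - w| ^ (e - 1) := by
  have h1 : s.re ≤ ‖s - w * I‖ := by
    have := Complex.re_le_norm (s - w * I); simpa using this
  have h2 : |s.im - w| ≤ ‖s - w * I‖ := by
    have := Complex.abs_im_le_norm (s - w * I); simpa using this
  have h0 : 0 < ‖s - w * I‖ := by linarith
  have : ‖s - w * I‖⁻¹ = ‖s - w * I‖ ^ (-e) * ‖s - w * I‖ ^ (e - 1) := by
    rw [← Real.rpow_add h0, ← Real.rpow_neg_one]; congr 1; ring
  rw [this]
  gcongr ?_ * ?_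
  · exact Real.rpow_le_rpow_of_nonpos hs h1 (by linarith)
  · exact Real.rpow_le_rpow_of_nonpos (abs_pos.2 hw) h2 (by linarith)

theorem Hf_major (lam : ℝ) (hlam : 0 < lam) (c : ℂ) (hc : c ≠ 0) (K w0 : ℝ) (hP : HP lam c K w0)
    (e : ℝ) (he : 0 < e) (he1 : e < 1) :
    ∃ D : ℝ → ℝ, Integrable D ∧ ∀ d : ℝ, 0 < d → ∀ᵐ w : ℝ,
      ‖Hf lam c (d + w * I)‖ ≤ (1 + d ^ (-e)) * D w := by
  obtain ⟨R, C1, hR, hC1, hfar⟩ := Hf_far lam hlam c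
  obtain ⟨C2, hC2, hnear⟩ := Hf_near lam hlam c hc K w0 hP R (by linarith)
  set m : ℝ := 1 + min 1 lam with hm
  have hm1 : 1 < m := by
    have : 0 < min 1 lam := lt_min one_pos hlam
    linarith
  let D1 : ℝ → ℝ := fun w => C1 * 2 ^ m * (1 + ‖w‖) ^ (-m)
  let D2 : ℝ → ℝ := (Icc (-R) R).indicator (fun w => C2 * (1 + |w - 0| ^ (lam - 1) +
    (|w - w0| ^ (e - 1) + |w - (-w0)| ^ (e - 1))))
  have hD1 : Integrable D1 := (integrable_one_add_norm (by simpa using hm1)).const_mul _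
  have hD2 : Integrable D2 := by
    rw [integrable_indicator_iff measurableSet_Icc]
    refine Integrable.const_mul ?_ _
    refine ((integrable_const _).add (abs_rpow_locint _ _ _ (by linarith))).add
      ((abs_rpow_locint _ _ _ (by linarith)).add (abs_rpow_locint _ _ _ (by linarith)))
  refine ⟨fun w => D1 w + D2 w, hD1.add hD2, ?_⟩
  intro d hd
  have hne : ∀ x : ℝ, ∀ᵐ w : ℝ, w ≠ x := fun x => by
    simp [ae_iff]
  filter_upwards [hne 0, hne w0, hne (-w0)] with w h0 h1 h2
  set s : ℂ := d + w * I with hs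
  have hre : s.re = d := by simp [hs]
  have him : s.im = w := by simp [hs]
  have hdp : 0 < d ^ (-e) := by positivity
  have hD1p : 0 ≤ D1 w := by positivity
  have hD2p : 0 ≤ D2 w := indicator_nonneg (fun w _ => by positivity) w
  rcases le_total R ‖s‖ with h | h
  · have h3 := hfar s (by rw [hre]; exact hd) h
    have h4 : |w| ≤ ‖s‖ := by rw [← him]; exact Complex.abs_im_le_norm s
    have h5 : (1 + ‖w‖) / 2 ≤ ‖s‖ := by rw [Real.norm_eq_abs]; linarith
    have h6 : ‖s‖ ^ (-m) ≤ ((1 + ‖w‖) / 2) ^ (-m) :=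
      Real.rpow_le_rpow_of_nonpos (by positivity) h5 (by linarith)
    have h7 : ((1 + ‖w‖) / 2) ^ (-m) = 2 ^ m * (1 + ‖w‖) ^ (-m) := by
      rw [Real.div_rpow (by positivity) (by norm_num), Real.rpow_neg (by norm_num : (0:ℝ) ≤ 2)]
      field_simp
    have h8 : ‖Hf lam c s‖ ≤ D1 w := by
      refine h3.trans ?_
      simp only [D1]
      rw [mul_assoc, ← h7]
      gcongr
    nlinarith
  · have h3 := hnear s (by rw [hre]; exact hd) (by rw [him]; exact h0) h
    have h4 : |w| ≤ R := by rw [← him]; exact (Complex.abs_im_le_norm s).trans h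
    have h5 : D2 w = C2 * (1 + |w| ^ (lam - 1) + (|w - w0| ^ (e - 1) + |w + w0| ^ (e - 1))) := by
      simp only [D2]
      rw [indicator_of_mem (show w ∈ Icc (-R) R from abs_le.1 h4)]
      simp
    have h6 := pole_bound s w0 e he he1 (by rw [hre]; exact hd) (by rw [him]; exact sub_ne_zero.2 h1)
    have h7 := pole_bound s (-w0) e he he1 (by rw [hre]; exact hd) (by rw [him]; exact sub_ne_zero.2 h2)
    rw [hre, him] at h6 h7
    simp only [Complex.ofReal_neg, neg_mul, sub_neg_eq_add] at h7
    rw [him] at h3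
    have hp1 : 0 ≤ |w| ^ (lam - 1) := by positivity
    have hp2 : 0 ≤ |w - w0| ^ (e - 1) := by positivity
    have hp3 : 0 ≤ |w + w0| ^ (e - 1) := by positivity
    have h8 : ‖Hf lam c s‖ ≤ (1 + d ^ (-e)) * D2 w := by
      refine h3.trans ?_
      rw [h5, mul_left_comm]
      gcongr
      nlinarith [mul_nonneg hdp.le hp1]
    nlinarith

/-! Part 3: inversion and contour shift -/

theorem Hf_contLine (lam : ℝ) (c : ℂ) (K w0 : ℝ) (hP : HP lam c K w0) :
    DifferentiableOn ℂ (Hf lam c) {s | 0 < s.re} := by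
  intro s hs
  have hs' : 0 < s.re := hs
  have hslit : s ∈ Complex.slitPlane := Or.inl hs'
  apply DifferentiableAt.differentiableWithinAt
  unfold Hf
  have hpow : ∀ b : ℂ, DifferentiableAt ℂ (fun s : ℂ => s ^ b) s := fun b =>
    differentiableAt_id.cpow_const hslit
  refine ((hpow _).add_const _).div (((hpow _).sub_const _).mul (differentiableAt_id.add_const _)) ?_
  refine mul_ne_zero (sub_ne_zero.2 (hP s hs').1) ?_
  intro h
  have := (norm_add_one s hs').2
  have h' : s + 1 = 0 := h
  rw [h', norm_zero] at this
  linarith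

theorem line_cont (lam : ℝ) (c : ℂ) (K w0 : ℝ) (hP : HP lam c K w0) (d : ℝ) (hd : 0 < d) :
    Continuous (fun w : ℝ => Hf lam c (d + w * I)) := by
  have h := (Hf_contLine lam c K w0 hP).continuousOn
  refine h.comp_continuous (by fun_prop) ?_
  intro w; simpa using hd

theorem line_int (lam : ℝ) (hlam : 0 < lam) (c : ℂ) (hc : c ≠ 0) (K w0 : ℝ) (hP : HP lam c K w0)
    (d : ℝ) (hd : 0 < d) : Integrable (fun w : ℝ => Hf lam c (d + w * I)) := by
  obtain ⟨D, hD, hb⟩ := Hf_major lam hlam c hc K w0 hP (1/2) (by norm_num) (by norm_num)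
  exact Integrable.mono' (hD.const_mul _) (line_cont lam c K w0 hP d hd).aestronglyMeasurable (hb d hd)

theorem norm_exp_line (d w u : ℝ) : ‖Complex.exp ((d + w * I) * u)‖ = Real.exp (d * u) := by
  rw [Complex.norm_exp]; simp

theorem line_int_exp (lam : ℝ) (hlam : 0 < lam) (c : ℂ) (hc : c ≠ 0) (K w0 : ℝ) (hP : HP lam c K w0)
    (d : ℝ) (hd : 0 < d) (u : ℝ) :
    Integrable (fun w : ℝ => Hf lam c (d + w * I) * Complex.exp ((d + w * I) * u)) := by
  refine (line_int lam hlam c hc K w0 hP d hd).mul_bdd (c := Real.exp (d * u))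
    (Continuous.aestronglyMeasurable (by fun_prop)) ?_
  exact ae_of_all _ fun w => (norm_exp_line d w u).le

theorem contour_shift (lam : ℝ) (hlam : 0 < lam) (c : ℂ) (hc : c ≠ 0) (K w0 : ℝ)
    (hP : HP lam c K w0) (d B : ℝ) (hd : 0 < d) (hdB : d ≤ B) (u : ℝ) (hu : 0 < u) :
    ∫ w : ℝ, Hf lam c (d + w * I) * Complex.exp ((d + w * I) * u) =
      ∫ w : ℝ, Hf lam c (B + w * I) * Complex.exp ((B + w * I) * u) := by
  set G : ℂ → ℂ := fun s => Hf lam c s * Complex.exp (s * u) with hG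
  have hB : 0 < B := hd.trans_le hdB
  obtain ⟨R, C1, hR, hC1, hfar⟩ := Hf_far lam hlam c
  have hdiff : DifferentiableOn ℂ G {s | 0 < s.re} :=
    (Hf_contLine lam c K w0 hP).mul (by fun_prop)
  have hrect : ∀ T : ℝ, 0 < T →
      (∫ w in (-T)..T, G (B + w * I)) - (∫ w in (-T)..T, G (d + w * I)) =
      I * ((∫ x in d..B, G (x + (-T : ℝ) * I)) - (∫ x in d..B, G (x + T * I))) := by
    intro T hT
    have := Complex.integral_boundary_rect_eq_zero_of_differentiableOn G (d + (-T : ℝ) * I) (B + T * I) (by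
      refine hdiff.mono ?_
      intro s hs
      have h1 : s.re ∈ uIcc d B := by simpa using hs.1
      rw [uIcc_of_le hdB] at h1
      exact hd.trans_le h1.1)
    have e1 : ((d:ℂ) + (-T : ℝ) * I).re = d := by simp
    have e2 : ((d:ℂ) + (-T : ℝ) * I).im = -T := by simp
    have e3 : ((B:ℂ) + T * I).re = B := by simp
    have e4 : ((B:ℂ) + T * I).im = T := by simp
    rw [e1, e2, e3, e4] at this
    simp only [smul_eq_mul] at this
    linear_combination (-I) * this + ((∫ w in (-T)..T, G (B + w * I)) - (∫ w in (-T)..T, G (d + w * I))) * Complex.I_sq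
  have hbd : ∀ T : ℝ, R ≤ |T| → ‖∫ x in d..B, G (x + T * I)‖ ≤
      C1 * |T| ^ (-(1 + min 1 lam)) * Real.exp (B * u) * |B - d| := by
    intro T hT
    apply intervalIntegral.norm_integral_le_of_norm_le_const
    intro x hx
    rw [uIoc_of_le hdB] at hx
    have hx0 : 0 < x := hd.trans hx.1
    have hTn : |T| ≤ ‖(x + T * I : ℂ)‖ := by
      have := Complex.abs_im_le_norm (x + T * I : ℂ); simpa using this
    simp only [hG]
    rw [norm_mul, norm_exp_line]
    have h1 := hfar (x + T * I) (by simpa using hx0) (hT.trans hTn)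
    have h2 : ‖(x + T * I : ℂ)‖ ^ (-(1 + min 1 lam)) ≤ |T| ^ (-(1 + min 1 lam)) := by
      refine Real.rpow_le_rpow_of_nonpos (by linarith) hTn ?_
      have : 0 < min 1 lam := lt_min one_pos hlam
      linarith
    have h3 : ‖Hf lam c (x + T * I)‖ ≤ C1 * |T| ^ (-(1 + min 1 lam)) :=
      h1.trans (by gcongr)
    have h4 : x * u ≤ B * u := by gcongr; exact hx.2
    gcongr
  have hlim0 : Filter.Tendsto (fun T : ℝ => C1 * |T| ^ (-(1 + min 1 lam)) * Real.exp (B * u) * |B - d|)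
      Filter.atTop (nhds 0) := by
    have h1 : Filter.Tendsto (fun T : ℝ => T ^ (-(1 + min 1 lam))) Filter.atTop (nhds 0) :=
      tendsto_rpow_neg_atTop (by have : 0 < min 1 lam := lt_min one_pos hlam
                                 linarith)
    have h2 : Filter.Tendsto (fun T : ℝ => |T| ^ (-(1 + min 1 lam))) Filter.atTop (nhds 0) :=
      h1.comp Filter.tendsto_abs_atTop_atTop
    have := ((h2.const_mul C1).mul_const (Real.exp (B * u))).mul_const |B - d|
    simpa using this
  have hz1 : Filter.Tendsto (fun T : ℝ => ∫ x in d..B, G (x + T * I)) Filter.atTop (nhds 0) := by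
    refine squeeze_zero_norm' ?_ hlim0
    filter_upwards [Filter.eventually_ge_atTop R] with T hT
    exact hbd T (hT.trans (le_abs_self T))
  have hz2 : Filter.Tendsto (fun T : ℝ => ∫ x in d..B, G (x + (-T : ℝ) * I)) Filter.atTop (nhds 0) := by
    refine squeeze_zero_norm' ?_ hlim0
    filter_upwards [Filter.eventually_ge_atTop R] with T hT
    have := hbd (-T) (by rw [abs_neg]; exact hT.trans (le_abs_self T))
    rwa [abs_neg] at this
  have hl1 := intervalIntegral_tendsto_integral (line_int_exp lam hlam c hc K w0 hP d hd u)
    Filter.tendsto_neg_atTop_atBot (Filter.tendsto_id (α := ℝ))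
  have hl2 := intervalIntegral_tendsto_integral (line_int_exp lam hlam c hc K w0 hP B hB u)
    Filter.tendsto_neg_atTop_atBot (Filter.tendsto_id (α := ℝ))
  have hl3 := hl2.sub hl1
  have hl4 : Filter.Tendsto (fun T : ℝ => (∫ w in (-T)..T, G (B + w * I)) - (∫ w in (-T)..T, G (d + w * I)))
      Filter.atTop (nhds 0) := by
    have h5 : Filter.Tendsto (fun T : ℝ => I * ((∫ x in d..B, G (x + (-T : ℝ) * I)) - (∫ x in d..B, G (x + T * I))))
      Filter.atTop (nhds 0) := by
      have := (hz2.sub hz1).const_mul I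
      simpa using this
    refine h5.congr' ?_
    filter_upwards [Filter.eventually_gt_atTop 0] with T hT
    exact (hrect T hT).symm
  have := tendsto_nhds_unique hl3 hl4
  exact (sub_eq_zero.1 this).symm

theorem inversion (lam : ℝ) (hlam : 0 < lam) (c : ℂ) (hc : c ≠ 0) (K w0 : ℝ)
    (hP : HP lam c K w0) (B : ℝ) (hB : mlA lam c < B) (u : ℝ) (hu : 0 < u) :
    mly lam c u - Complex.exp (-u) =
      (2 * (Real.pi : ℂ))⁻¹ * ∫ w : ℝ, Hf lam c (B + w * I) * Complex.exp ((B + w * I) * u) := by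
  have hA0 : 0 ≤ mlA lam c := by unfold mlA; positivity
  have hB0 : 0 < B := hA0.trans_lt hB
  set g : ℝ → ℂ := fun x => Complex.exp (-((B:ℂ) * x)) * (mly lam c x - Complex.exp (-x)) with hg
  have hgc : Continuous g := by
    have := mly_contOn lam hlam c
    rw [hg]; fun_prop
  set f : ℝ → ℂ := (Ioi (0:ℝ)).indicator g with hf
  have hI1 : ∀ s : ℂ, mlA lam c < s.re →
      IntegrableOn (fun u : ℝ => Complex.exp (-(s * u)) * mly lam c u) (Ioi 0) :=
    fun s hs => mly_exp_int lam hlam c hc s hs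
  have hI2 : ∀ s : ℂ, 0 < s.re →
      IntegrableOn (fun u : ℝ => Complex.exp (-(s * u)) * Complex.exp (-u)) (Ioi 0) ∧
      ∫ u in Ioi (0:ℝ), Complex.exp (-(s * u)) * Complex.exp (-u) = 1 / (s + 1) := by
    intro s hs
    have h1 : ∀ u : ℝ, Complex.exp (-(s * u)) * Complex.exp (-u) = Complex.exp ((-(s + 1)) * u) := by
      intro u; rw [← Complex.exp_add]; ring_nf
    have h2 : (-(s + 1)).re < 0 := by simp; linarith
    simp only [h1]
    refine ⟨integrableOn_exp_mul_complex_Ioi h2 0, ?_⟩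
    rw [integral_exp_mul_complex_Ioi h2 0]
    rw [Complex.ofReal_zero, mul_zero, Complex.exp_zero, neg_div_neg_eq]
  have hfi : Integrable f := by
    rw [hf, integrable_indicator_iff measurableSet_Ioi]
    have := (hI1 B (by simpa using hB)).sub (hI2 B (by simpa using hB0)).1
    refine this.congr (ae_of_all _ fun x => ?_)
    simp only [hg, Pi.sub_apply]; ring
  have hlap : ∀ s : ℂ, mlA lam c < s.re →
      ∫ u in Ioi (0:ℝ), Complex.exp (-(s * u)) * (mly lam c u - Complex.exp (-u)) = Hf lam c s := by
    intro s hs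
    have hs0 : 0 < s.re := hA0.trans_lt hs
    have h1 := mly_laplace lam hlam c hc (mlA lam c) hA0 (fun x hx => hI1 x (by simpa using hx)) s hs
    simp only [mul_sub]
    rw [integral_sub (hI1 s hs) (hI2 s hs0).1, (hI2 s hs0).2]
    have h2 : s ^ (lam:ℂ) - c ≠ 0 := sub_ne_zero.2 (hP s hs0).1
    have h3 : s + 1 ≠ 0 := by
      intro h
      have := (norm_add_one s hs0).2
      rw [h, norm_zero] at this
      linarith
    have hsne : s ≠ 0 := by rintro rfl; simp at hs0
    have h4 : s ^ (lam:ℂ) = s ^ ((lam:ℂ) - 1) * s := by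
      rw [Complex.cpow_sub _ _ hsne, Complex.cpow_one]; field_simp
    unfold Hf
    rw [eq_div_of_mul_eq h2 h1]
    field_simp
    rw [h4]; ring
  have hfour : ∀ ξ : ℝ, FourierTransform.fourier f ξ = Hf lam c (B + (2 * Real.pi * ξ : ℝ) * I) := by
    intro ξ
    rw [Real.fourier_eq', ← hlap _ (by simpa using hB), ← integral_indicator measurableSet_Ioi]
    congr 1
    ext x
    simp only [hf, indicator]
    split_ifs with hx
    · simp only [hg, smul_eq_mul, RCLike.inner_apply, conj_trivial]
      rw [← mul_assoc, ← Complex.exp_add]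
      congr 2
      push_cast; ring
    · simp
  have hfouri : Integrable (FourierTransform.fourier f) := by
    have h1 := (line_int lam hlam c hc K w0 hP B hB0).comp_mul_left' (R := 2 * Real.pi) (by positivity)
    refine h1.congr (ae_of_all _ fun ξ => ?_)
    simp only
    rw [hfour]
  have hcont : ContinuousAt f u := by
    have : f =ᶠ[nhds u] g := by
      filter_upwards [Ioi_mem_nhds hu] with x hx
      rw [hf, indicator_of_mem hx]
    exact (continuousAt_congr this).2 hgc.continuousAt
  have hinv := hfi.fourierInv_fourier_eq hfouri hcont
  rw [Real.fourierInv_eq'] at hinv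
  have hfu : f u = g u := by rw [hf, indicator_of_mem (show u ∈ Ioi (0:ℝ) from hu)]
  rw [hfu] at hinv
  have hfin : mly lam c u - Complex.exp (-u) = Complex.exp (B * u) * g u := by
    simp only [hg]
    rw [← mul_assoc, ← Complex.exp_add]; simp
  rw [hfin, ← hinv, ← integral_const_mul]
  have hch := Measure.integral_comp_mul_left
    (fun w : ℝ => Hf lam c (B + w * I) * Complex.exp ((B + w * I) * u)) (2 * Real.pi)
  rw [abs_of_nonneg (by positivity)] at hch
  have hch2 : ((2 * Real.pi : ℝ)⁻¹ : ℝ) • (∫ w : ℝ, Hf lam c (B + w * I) * Complex.exp ((B + w * I) * u)) =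
    (2 * Real.pi : ℂ)⁻¹ * ∫ w : ℝ, Hf lam c (B + w * I) * Complex.exp ((B + w * I) * u) := by
    rw [Complex.real_smul]; push_cast; rfl
  rw [← hch2, ← hch]
  congr 1
  ext ξ
  rw [hfour]
  simp only [smul_eq_mul, RCLike.inner_apply, conj_trivial]
  rw [← mul_assoc, ← Complex.exp_add, mul_comm]
  congr 2
  push_cast; ring

theorem mly_good (lam : ℝ) (hlam : 0 < lam) (c : ℂ) (hc : c ≠ 0) (K w0 : ℝ)
    (hP : HP lam c K w0) (e : ℝ) (he : 0 < e) (he1 : e < 1) :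
    ∃ C : ℝ, ∀ u : ℝ, 1 ≤ u → ‖mly lam c u‖ ≤ C * u ^ e := by
  obtain ⟨D, hD, hb⟩ := Hf_major lam hlam c hc K w0 hP e he he1
  set B : ℝ := max 1 (mlA lam c) + 1 with hB
  have hB1 : 1 ≤ B := by rw [hB]; linarith [le_max_left 1 (mlA lam c)]
  have hBA : mlA lam c < B := by rw [hB]; linarith [le_max_right 1 (mlA lam c)]
  refine ⟨1 + (2 * Real.pi)⁻¹ * (2 * |∫ w, D w| * Real.exp 1), ?_⟩
  intro u hu
  have hu0 : 0 < u := by linarith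
  have hd : 0 < u⁻¹ := by positivity
  have hue : 1 ≤ u ^ e := Real.one_le_rpow hu he.le
  have h1 := inversion lam hlam c hc K w0 hP B hBA u hu0
  rw [← contour_shift lam hlam c hc K w0 hP u⁻¹ B hd ((inv_le_one_of_one_le₀ hu).trans hB1) u hu0] at h1
  have h2 : ‖∫ w : ℝ, Hf lam c ((u⁻¹ : ℝ) + w * I) * Complex.exp (((u⁻¹ : ℝ) + w * I) * u)‖ ≤
      ∫ w, (2 * u ^ e * Real.exp 1) * D w := by
    refine norm_integral_le_of_norm_le (hD.const_mul _) ?_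
    filter_upwards [hb u⁻¹ hd] with w hw
    rw [norm_mul, norm_exp_line, inv_mul_cancel₀ hu0.ne']
    have h3 : (u⁻¹) ^ (-e) = u ^ e := by
      rw [Real.rpow_neg (by positivity), Real.inv_rpow hu0.le, inv_inv]
    rw [h3] at hw
    have hDw : 0 ≤ D w := by
      have : 0 ≤ (1 + u ^ e) * D w := (norm_nonneg _).trans hw
      by_contra hneg
      nlinarith
    calc _ ≤ ((1 + u ^ e) * D w) * Real.exp 1 := by gcongr
      _ ≤ ((2 * u ^ e) * D w) * Real.exp 1 := by gcongr; linarith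
      _ = _ := by ring
  rw [integral_const_mul] at h2
  have h4 : ‖mly lam c u - Complex.exp (-u)‖ ≤ (2 * Real.pi)⁻¹ * (2 * u ^ e * Real.exp 1 * |∫ w, D w|) := by
    rw [h1, norm_mul]
    have h5 : ‖(2 * (Real.pi:ℂ))⁻¹‖ = (2 * Real.pi)⁻¹ := by
      rw [norm_inv, norm_mul, Complex.norm_real, Real.norm_of_nonneg Real.pi_pos.le]; simp
    rw [h5]
    gcongr
    refine h2.trans ?_
    gcongr
    exact le_abs_self _
  have h6 : ‖Complex.exp (-(u:ℂ))‖ ≤ 1 := by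
    rw [Complex.norm_exp]; simp; linarith
  calc ‖mly lam c u‖ = ‖(mly lam c u - Complex.exp (-u)) + Complex.exp (-u)‖ := by rw [sub_add_cancel]
    _ ≤ (2 * Real.pi)⁻¹ * (2 * u ^ e * Real.exp 1 * |∫ w, D w|) + 1 :=
        (norm_add_le _ _).trans (add_le_add h4 h6)
    _ ≤ _ := by
        rw [add_mul, one_mul, add_comm]
        refine add_le_add hue (le_of_eq ?_)
        ring

/-! Part 4: the dichotomy -/

theorem arg_lt_of_re (s : ℂ) (hs : 0 < s.re) : |s.arg| < Real.pi / 2 :=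
  Complex.abs_arg_lt_pi_div_two_iff.2 (Or.inl hs)

theorem dich_D (lam : ℝ) (hlam : 0 < lam) (c : ℂ) (hc : c ≠ 0)
    (h : |c.arg| < lam * Real.pi / 2) : ∃ s : ℂ, 0 < s.re ∧ s ^ (lam:ℂ) = c := by
  have hpi := Real.pi_pos
  have hl : (lam:ℂ) ≠ 0 := by exact_mod_cast hlam.ne'
  have him : (Complex.log c / lam).im = c.arg / lam := by
    rw [Complex.div_ofReal_im, Complex.log_im]
  have hb : |c.arg / lam| < Real.pi / 2 := by
    rw [abs_div, abs_of_pos hlam, div_lt_iff₀ hlam]; linarith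
  rw [abs_lt] at hb
  refine ⟨Complex.exp (Complex.log c / lam), ?_, ?_⟩
  · rw [Complex.exp_re, him]
    exact mul_pos (Real.exp_pos _) (Real.cos_pos_of_mem_Ioo ⟨by linarith, by linarith⟩)
  · rw [Complex.cpow_def_of_ne_zero (Complex.exp_ne_zero _),
      Complex.log_exp (by rw [him]; linarith) (by rw [him]; linarith), div_mul_cancel₀ _ hl,
      Complex.exp_log hc]

theorem dich_A (lam : ℝ) (hlam : 0 < lam) (hlam2 : lam ≤ 2) (c : ℂ) (hc : c ≠ 0)
    (h : lam * Real.pi / 2 < |c.arg|) : ∃ K w0, HP lam c K w0 := by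
  have hpi := Real.pi_pos
  have hc' : 0 < ‖c‖ := norm_pos_iff.2 hc
  set α := lam * Real.pi / 2 with hα
  have hα0 : 0 < α := by positivity
  have hαpi : α ≤ Real.pi := by rw [hα]; nlinarith
  set η : ℝ := (‖c‖ * Real.cos α - c.re) / 2 with hη
  have hηpos : 0 < η := by
    have h1 : Real.cos |c.arg| < Real.cos α :=
      Real.cos_lt_cos_of_nonneg_of_le_pi hα0.le (Complex.abs_arg_le_pi c) h
    rw [Real.cos_abs] at h1
    have h2 := Complex.norm_mul_cos_arg c
    rw [hη, ← h2]
    have := mul_lt_mul_of_pos_left h1 hc'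
    linarith
  have hkey : ∀ s : ℂ, 0 < s.re → η ≤ ‖s ^ (lam:ℂ) - c‖ := by
    intro s hs
    set w := s ^ (lam:ℂ) with hw
    have h1 : ‖w‖ * Real.cos α ≤ w.re := by
      have e1 : w.re = ‖s‖ ^ lam * Real.cos (s.arg * lam) := by
        rw [hw, Complex.cpow_ofReal]
        simp [← Complex.ofReal_cos, ← Complex.ofReal_sin]
      rw [e1, hw, Complex.norm_cpow_real]
      gcongr
      rw [← Real.cos_abs (s.arg * lam)]
      have hs1 := arg_lt_of_re s hs
      have e2 : |s.arg * lam| ≤ α := by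
        rw [abs_mul, abs_of_pos hlam, hα]; nlinarith
      exact Real.cos_le_cos_of_nonneg_of_le_pi (abs_nonneg _) hαpi e2
    have h2 : w.re - c.re ≤ ‖w - c‖ := by
      have := Complex.re_le_norm (w - c); simpa using this
    have h3 : ‖c‖ - ‖w‖ ≤ ‖w - c‖ := by rw [norm_sub_rev]; exact norm_sub_norm_le c w
    have h3' : ‖w‖ - ‖c‖ ≤ ‖w - c‖ := norm_sub_norm_le w c
    have h4 := Real.cos_le_one α
    have h5 := Real.neg_one_le_cos α
    have h6 : (‖c‖ - ‖w‖) * Real.cos α ≤ ‖w - c‖ := by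
      calc (‖c‖ - ‖w‖) * Real.cos α ≤ |(‖c‖ - ‖w‖) * Real.cos α| := le_abs_self _
        _ = |‖c‖ - ‖w‖| * |Real.cos α| := abs_mul _ _
        _ ≤ ‖w - c‖ * 1 := by
          gcongr
          · exact abs_le.2 ⟨by linarith, h3⟩
          · exact abs_le.2 ⟨h5, h4⟩
        _ = _ := mul_one _
    rw [hη]
    linarith
  refine ⟨η⁻¹, 0, fun s hs => ⟨?_, ?_⟩⟩
  · intro h0
    have := hkey s hs
    rw [h0, sub_self, norm_zero] at this
    linarith
  · calc ‖s ^ (lam:ℂ) - c‖⁻¹ ≤ η⁻¹ * 1 := by rw [mul_one]; exact inv_anti₀ hηpos (hkey s hs)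
      _ ≤ _ := by
        gcongr
        have : 0 ≤ ‖s - (0:ℝ) * I‖⁻¹ + ‖s + (0:ℝ) * I‖⁻¹ := by positivity
        linarith

theorem dich_B (lam : ℝ) (hlam : 0 < lam) (hlam2 : lam < 2) (c : ℂ) (hc : c ≠ 0)
    (h : lam * Real.pi / 2 = |c.arg|) : ∃ K w0, HP lam c K w0 := by
  have hpi := Real.pi_pos
  have hl : (lam:ℂ) ≠ 0 := by exact_mod_cast hlam.ne'
  have hslit : c ∈ Complex.slitPlane := by
    rw [Complex.mem_slitPlane_iff_arg]
    refine ⟨?_, hc⟩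
    intro h1
    rw [h1, abs_of_pos hpi] at h
    nlinarith
  set s0 : ℂ := c ^ (1 / (lam:ℂ)) with hs0
  have hre : s0.re = 0 := by
    have him : (Complex.log c * (1 / (lam:ℂ))).im = c.arg / lam := by
      rw [mul_one_div, Complex.div_ofReal_im, Complex.log_im]
    rw [hs0, Complex.cpow_def_of_ne_zero hc, Complex.exp_re, him, ← Real.cos_abs, abs_div, ← h,
      abs_of_pos hlam]
    have : lam * Real.pi / 2 / lam = Real.pi / 2 := by field_simp
    rw [this, Real.cos_pi_div_two, mul_zero]
  set w0 := s0.im with hw0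
  have hs0' : s0 = w0 * I := by
    apply Complex.ext
    · simp [hre]
    · simp [hw0]
  have hinv : ∀ s : ℂ, 0 < s.re → (s ^ (lam:ℂ)) ^ (1 / (lam:ℂ)) = s := by
    intro s hs
    have hsne : s ≠ 0 := by rintro rfl; simp at hs
    have hs1 := arg_lt_of_re s hs
    rw [abs_lt] at hs1
    have him : (Complex.log s * (lam:ℂ)).im = s.arg * lam := by
      rw [Complex.im_mul_ofReal, Complex.log_im]
    rw [Complex.cpow_def_of_ne_zero hsne lam, Complex.cpow_def_of_ne_zero (Complex.exp_ne_zero _),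
      Complex.log_exp (by rw [him]; nlinarith) (by rw [him]; nlinarith), mul_assoc,
      mul_one_div_cancel hl, mul_one, Complex.exp_log hsne]
  have hdiff : DifferentiableAt ℂ (fun w : ℂ => w ^ (1 / (lam:ℂ))) c :=
    differentiableAt_id.cpow_const hslit
  obtain ⟨C, hC0, hC⟩ := hdiff.isBigO_sub.exists_pos
  rw [Asymptotics.isBigOWith_iff] at hC
  obtain ⟨r, hr, hball⟩ := Metric.eventually_nhds_iff.1 hC
  have hloc : ∀ s : ℂ, 0 < s.re → ‖s ^ (lam:ℂ) - c‖ < r → ‖s - w0 * I‖ ≤ C * ‖s ^ (lam:ℂ) - c‖ := by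
    intro s hs hlt
    have := hball (y := s ^ (lam:ℂ)) (by rwa [dist_eq_norm])
    rwa [hinv s hs, ← hs0, hs0'] at this
  have hpos : ∀ s : ℂ, 0 < s.re → 0 < ‖s - w0 * I‖ := by
    intro s hs
    rw [norm_pos_iff]
    intro h0
    have := congrArg Complex.re h0
    simp at this
    linarith
  refine ⟨r⁻¹ + C, w0, fun s hs => ⟨?_, ?_⟩⟩
  · intro h0
    have := hloc s hs (by rw [h0, sub_self, norm_zero]; exact hr)
    rw [h0, sub_self, norm_zero, mul_zero] at this
    linarith [hpos s hs]
  · have p1 : 0 ≤ ‖s - w0 * I‖⁻¹ := by positivity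
    have p2 : 0 ≤ ‖s + w0 * I‖⁻¹ := by positivity
    have p3 : 0 < r⁻¹ := by positivity
    rcases lt_or_ge ‖s ^ (lam:ℂ) - c‖ r with hlt | hge
    · have h1 := hloc s hs hlt
      have h2 := hpos s hs
      have h3 : 0 < ‖s ^ (lam:ℂ) - c‖ := by
        by_contra hn
        have : ‖s ^ (lam:ℂ) - c‖ = 0 := le_antisymm (not_lt.1 hn) (norm_nonneg _)
        rw [this, mul_zero] at h1
        linarith
      have h4 : ‖s ^ (lam:ℂ) - c‖⁻¹ ≤ C * ‖s - w0 * I‖⁻¹ := by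
        rw [← one_div, ← div_eq_mul_inv, div_le_div_iff₀ h3 h2]; linarith
      nlinarith [mul_nonneg p3.le p1, mul_nonneg p3.le p2, mul_nonneg hC0.le p2]
    · have h4 : ‖s ^ (lam:ℂ) - c‖⁻¹ ≤ r⁻¹ := inv_anti₀ hr hge
      nlinarith [mul_nonneg p3.le p1, mul_nonneg p3.le p2, mul_nonneg hC0.le p2, mul_nonneg hC0.le p1]

theorem dich_C (c : ℂ) (hc : c ≠ 0) (h : Real.pi ≤ |c.arg|) : ∃ K w0, HP 2 c K w0 := by
  have hpi := Real.pi_pos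
  have hc' : 0 < ‖c‖ := norm_pos_iff.2 hc
  have harg : c.arg = Real.pi := by
    have h1 := Complex.arg_le_pi c
    have h2 := Complex.neg_pi_lt_arg c
    rcases abs_cases c.arg with h3 | h3 <;> linarith
  have hcn : c = -((‖c‖:ℝ) : ℂ) := by
    have := Complex.norm_mul_exp_arg_mul_I c
    rw [harg, Complex.exp_pi_mul_I] at this
    rw [← this]; simp
  set w0 := Real.sqrt ‖c‖ with hw0
  have hw0p : 0 < w0 := Real.sqrt_pos.2 hc'
  have hw2 : (w0:ℂ) ^ 2 = (‖c‖ : ℝ) := by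
    rw [← Complex.ofReal_pow, hw0, Real.sq_sqrt hc'.le]
  have hfac : ∀ s : ℂ, s ^ ((2:ℝ):ℂ) - c = (s - w0 * I) * (s + w0 * I) := by
    intro s
    have : s ^ ((2:ℝ):ℂ) = s ^ 2 := by
      rw [Complex.ofReal_ofNat, Complex.cpow_ofNat]
    rw [this]
    have e : (s - w0 * I) * (s + w0 * I) = s ^ 2 + (w0:ℂ)^2 := by
      linear_combination (-(w0:ℂ)^2) * Complex.I_sq
    rw [e, hw2]
    nth_rewrite 1 [hcn]
    ring
  have hpos : ∀ (s : ℂ) (x : ℝ), 0 < s.re → 0 < ‖s + x * I‖ := by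
    intro s x hs
    rw [norm_pos_iff]
    intro h0
    have := congrArg Complex.re h0
    simp at this
    linarith
  refine ⟨(2 * w0)⁻¹, w0, fun s hs => ?_⟩
  have p1 : 0 < ‖s + w0 * I‖ := hpos s w0 hs
  have p2 : 0 < ‖s - w0 * I‖ := by
    have := hpos s (-w0) hs
    simpa [sub_eq_add_neg] using this
  constructor
  · rw [← sub_ne_zero, hfac, ← norm_ne_zero_iff, norm_mul]
    positivity
  · rw [hfac, norm_mul]
    have h1 : 2 * w0 ≤ ‖s - w0 * I‖ + ‖s + w0 * I‖ := by
      have h2 := norm_sub_le (s + w0 * I) (s - w0 * I)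
      have h3 : (s + w0 * I) - (s - w0 * I) = ((2 * w0 : ℝ) : ℂ) * I := by push_cast; ring
      rw [h3, norm_mul, Complex.norm_I, Complex.norm_real, Real.norm_of_nonneg (by positivity)] at h2
      linarith
    have h4 : (‖s - w0 * I‖ * ‖s + w0 * I‖)⁻¹ ≤ (2 * w0)⁻¹ * (‖s - w0 * I‖⁻¹ + ‖s + w0 * I‖⁻¹) := by
      rw [inv_add_inv p2.ne' p1.ne', ← one_div, ← one_div, div_mul_div_comm, one_mul,
        div_le_div_iff₀ (by positivity) (by positivity), one_mul]
      nlinarith [mul_le_mul_of_nonneg_right h1 (mul_pos p1 p2).le]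
    refine h4.trans ?_
    exact mul_le_mul_of_nonneg_left (by linarith) (by positivity)

theorem dichotomy (lam : ℝ) (hlam : 0 < lam) (c : ℂ) (hc : c ≠ 0) :
    (∃ K w0, HP lam c K w0) ∨ ∃ s : ℂ, 0 < s.re ∧ s ^ (lam:ℂ) = c := by
  have hpi := Real.pi_pos
  rcases lt_or_ge |c.arg| (lam * Real.pi / 2) with h | h
  · exact Or.inr (dich_D lam hlam c hc h)
  · left
    have hle := Complex.abs_arg_le_pi c
    have hl2 : lam ≤ 2 := by nlinarith
    rcases hl2.eq_or_lt with h2 | h2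
    · subst h2
      exact dich_C c hc (by linarith)
    · rcases h.eq_or_lt with h3 | h3
      · exact dich_B lam hlam h2 c hc h3
      · exact dich_A lam hlam hl2 c hc h3

/-! Part 5: assembly -/

noncomputable def gpart (lam tau : ℝ) (q b : ℂ) (t : ℝ) : ℂ :=
  (1 - (t : ℂ)) ^ b * mlE lam (-q / (1 - (t : ℂ)) ^ (tau : ℂ))

noncomputable def fpart (lam sig tau : ℝ) (p q a b : ℂ) (t : ℝ) : ℂ :=
  (t : ℂ) ^ a * mlE lam (-p / (t : ℂ) ^ (sig : ℂ)) * gpart lam tau q b t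

theorem gpart_cont (lam tau : ℝ) (hlam : 0 < lam) (q b : ℂ) :
    ContinuousOn (gpart lam tau q b) (Iio 1) := by
  have hE := (mlE_diff lam hlam).continuous
  unfold gpart
  intro t ht
  have ht' : t < 1 := ht
  have hsl : (1 - (t:ℂ)) ∈ Complex.slitPlane := Or.inl (by simp; exact ht')
  have hpow : ∀ e : ℂ, ContinuousAt (fun t : ℝ => (1 - (t:ℂ)) ^ e) t := fun e =>
    ContinuousAt.cpow (f := fun t : ℝ => 1 - (t:ℂ)) (by fun_prop) continuousAt_const hsl
  have hne : (1 - (t:ℂ)) ^ (tau:ℂ) ≠ 0 := by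
    intro h0
    rw [Complex.cpow_eq_zero_iff] at h0
    exact Complex.slitPlane_ne_zero hsl h0.1
  exact ((hpow b).mul (hE.continuousAt.comp (continuousAt_const.div (hpow tau) hne))).continuousWithinAt

theorem fpart_cont (lam sig tau : ℝ) (hlam : 0 < lam) (p q a b : ℂ) :
    ContinuousOn (fpart lam sig tau p q a b) (Ioo 0 1) := by
  have hE := (mlE_diff lam hlam).continuous
  unfold fpart
  refine ContinuousOn.mul ?_ ((gpart_cont lam tau hlam q b).mono fun t ht => ht.2)
  intro t ht
  have hsl : (t:ℂ) ∈ Complex.slitPlane := Or.inl (by simpa using ht.1)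
  have hpow : ∀ e : ℂ, ContinuousAt (fun t : ℝ => (t:ℂ) ^ e) t := fun e =>
    ContinuousAt.cpow (f := fun t : ℝ => (t:ℂ)) (by fun_prop) continuousAt_const hsl
  have hne : (t:ℂ) ^ (sig:ℂ) ≠ 0 := by
    intro h0
    rw [Complex.cpow_eq_zero_iff] at h0
    exact Complex.slitPlane_ne_zero hsl h0.1
  exact ((hpow a).mul (hE.continuousAt.comp (continuousAt_const.div (hpow sig) hne))).continuousWithinAt

theorem mlE_eq_mly (lam sig : ℝ) (hlam : 0 < lam) (p : ℂ) (t : ℝ) (ht : 0 < t) :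
    mlE lam (-p / (t : ℂ) ^ (sig : ℂ)) = mly lam (-p) (t ^ (-sig / lam)) := by
  unfold mly
  congr 1
  rw [← Real.rpow_mul ht.le, div_mul_cancel₀ _ hlam.ne', Real.rpow_neg ht.le, Complex.ofReal_inv,
    Complex.ofReal_cpow ht.le, div_eq_mul_inv]

theorem norm_tpow (t : ℝ) (ht : 0 < t) (a : ℂ) : ‖(t:ℂ) ^ a‖ = t ^ a.re :=
  Complex.norm_cpow_eq_rpow_re_of_pos ht a

theorem fpart_good (lam sig tau : ℝ) (hlam : 0 < lam) (hsig : 0 < sig) (p q a b : ℂ)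
    (ha : -1 < a.re) (hp : p ≠ 0) (K w0 : ℝ) (hP : HP lam (-p) K w0) :
    IntegrableOn (fpart lam sig tau p q a b) (Ioc 0 (1/2)) := by
  set e : ℝ := min (1/2) ((a.re + 1) * lam / (2 * sig)) with he
  have ha' : 0 < a.re + 1 := by linarith
  have he0 : 0 < e := lt_min (by norm_num) (by positivity)
  have he1 : e < 1 := (min_le_left _ _).trans_lt (by norm_num)
  obtain ⟨C, hC⟩ := mly_good lam hlam (-p) (neg_ne_zero.2 hp) K w0 hP e he0 he1
  obtain ⟨M, hM⟩ := isCompact_Icc.exists_bound_of_continuousOn (f := gpart lam tau q b)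
    ((gpart_cont lam tau hlam q b).mono (fun t (ht : t ∈ Icc (0:ℝ) (1/2)) => by
      have := ht.2; simp only [mem_Iio]; linarith))
  have hexp : sig / lam * e ≤ (a.re + 1) / 2 := by
    have : e ≤ (a.re + 1) * lam / (2 * sig) := min_le_right _ _
    calc sig / lam * e ≤ sig / lam * ((a.re + 1) * lam / (2 * sig)) := by gcongr
      _ = _ := by field_simp
  set r : ℝ := a.re + (-sig / lam) * e with hr
  have hr1 : -1 < r := by
    have : (-sig / lam) * e = -(sig / lam * e) := by ring
    rw [hr, this]; linarith
  have hInt : IntegrableOn (fun t : ℝ => t ^ r * (C * M)) (Ioc 0 (1/2)) := by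
    have := intervalIntegral.intervalIntegrable_rpow' (a := 0) (b := 1/2) hr1
    rw [intervalIntegrable_iff_integrableOn_Ioc_of_le (by norm_num)] at this
    exact this.mul_const _
  have hsub : Ioc (0:ℝ) (1/2) ⊆ Ioo 0 1 := fun t ht => ⟨ht.1, by linarith [ht.2]⟩
  refine Integrable.mono' hInt
    (((fpart_cont lam sig tau hlam p q a b).mono hsub).aestronglyMeasurable measurableSet_Ioc) ?_
  filter_upwards [ae_restrict_mem measurableSet_Ioc] with t ht
  have ht0 : 0 < t := ht.1
  have hu : 1 ≤ t ^ (-sig / lam) := by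
    apply Real.one_le_rpow_of_pos_of_le_one_of_nonpos ht0 (by linarith [ht.2])
    rw [neg_div]; have : 0 < sig / lam := by positivity
    linarith
  have h1 := hC _ hu
  have h2 := hM t ⟨ht0.le, ht.2⟩
  unfold fpart
  rw [norm_mul, norm_mul, norm_tpow t ht0, mlE_eq_mly lam sig hlam p t ht0]
  calc _ ≤ t ^ a.re * (C * (t ^ (-sig / lam)) ^ e) * M := by
        have h3 : 0 ≤ C * (t ^ (-sig / lam)) ^ e := (norm_nonneg _).trans h1
        gcongr
    _ = _ := by
        rw [← Real.rpow_mul ht0.le, hr, Real.rpow_add ht0]; ring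

theorem gpart_lower (lam tau : ℝ) (hlam : 0 < lam) (htau : 0 < tau) (q b : ℂ) (hq : q ≠ 0) :
    ∃ (m : ℕ) (k d : ℝ), 0 < k ∧ 0 < d ∧ d < 1 ∧ ∀ t : ℝ, 0 < t → t < d →
      k * t ^ m ≤ ‖gpart lam tau q b t‖ := by
  have hdiff := mlE_diff lam hlam
  have han : AnalyticAt ℂ (mlE lam) (-q) := hdiff.analyticAt _
  have hnz : ¬ ∀ᶠ w in nhds (-q), mlE lam w = 0 := by
    intro h
    have h1 : AnalyticOnNhd ℂ (mlE lam) univ := fun w _ => hdiff.analyticAt w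
    have h2 : AnalyticOnNhd ℂ (fun _ : ℂ => (0:ℂ)) univ := analyticOnNhd_const
    have := h1.eqOn_of_preconnected_of_eventuallyEq h2 isPreconnected_univ (mem_univ (-q)) h
    have h0 := this (mem_univ 0)
    rw [mlE_zero] at h0
    simp at h0
  obtain ⟨m, g, hg, hg0, hev⟩ := han.exists_eventuallyEq_pow_smul_nonzero_iff.2 hnz
  have hgn : 0 < ‖g (-q)‖ := norm_pos_iff.2 hg0
  have hev2 : ∀ᶠ w in nhds (-q), ‖g (-q)‖ / 2 < ‖g w‖ :=
    hg.continuousAt.norm.eventually (lt_mem_nhds (by simpa using half_lt_self hgn))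
  have htend : ContinuousAt (fun t : ℝ => -q / (1 - (t : ℂ)) ^ (tau : ℂ)) 0 := by
    have hsl : (1 - ((0:ℝ):ℂ)) ∈ Complex.slitPlane := by simp
    refine continuousAt_const.div
      (ContinuousAt.cpow (f := fun t : ℝ => 1 - (t:ℂ)) (by fun_prop) continuousAt_const hsl) ?_
    simp
  have htend' : Filter.Tendsto (fun t : ℝ => -q / (1 - (t : ℂ)) ^ (tau : ℂ)) (nhds 0) (nhds (-q)) := by
    have := htend.tendsto
    simpa using this
  have hb : ∀ᶠ t : ℝ in nhds 0, (1/2 : ℝ) < ‖(1 - (t:ℂ)) ^ b‖ := by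
    have hsl : (1 - ((0:ℝ):ℂ)) ∈ Complex.slitPlane := by simp
    have : ContinuousAt (fun t : ℝ => ‖(1 - (t:ℂ)) ^ b‖) 0 :=
      (ContinuousAt.cpow (f := fun t : ℝ => 1 - (t:ℂ)) (by fun_prop) continuousAt_const hsl).norm
    refine this.eventually (lt_mem_nhds ?_)
    simp; norm_num
  obtain ⟨d, hd, hball⟩ := Metric.eventually_nhds_iff.1
    ((hb.and (htend'.eventually (hev.and hev2))))
  have hqn : 0 < ‖q‖ := norm_pos_iff.2 hq
  refine ⟨m, (1/2) * ((‖q‖ * tau) ^ m * (‖g (-q)‖ / 2)), min d (1/2), by positivity,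
    lt_min hd (by norm_num), (min_le_right _ _).trans_lt (by norm_num), ?_⟩
  intro t ht htd
  have ht1 : t < 1 / 2 := htd.trans_le (min_le_right _ _)
  have h1t : 0 < 1 - t := by linarith
  obtain ⟨hb1, he1, he2⟩ := hball (y := t) (by
    rw [Real.dist_eq, sub_zero, abs_of_pos ht]; exact htd.trans_le (min_le_left _ _))
  unfold gpart
  rw [norm_mul, he1, smul_eq_mul, norm_mul, norm_pow]
  have hw : ‖q‖ * tau * t ≤ ‖-q / (1 - (t : ℂ)) ^ (tau : ℂ) - -q‖ := by
    have e1 : (1 - (t : ℂ)) ^ (tau : ℂ) = (((1 - t) ^ tau : ℝ) : ℂ) := by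
      rw [Complex.ofReal_cpow h1t.le]; push_cast; rfl
    have e2 : -q / (1 - (t : ℂ)) ^ (tau : ℂ) - -q = -q * ((((1 - t) ^ tau)⁻¹ - 1 : ℝ) : ℂ) := by
      rw [e1]; push_cast; ring
    have e3 : tau * t ≤ ((1 - t) ^ tau)⁻¹ - 1 := by
      have h5 : (1 - t) ^ tau ≤ Real.exp (-(tau * t)) := by
        calc (1 - t) ^ tau ≤ (Real.exp (-t)) ^ tau := by
              gcongr; linarith [Real.add_one_le_exp (-t)]
          _ = _ := by rw [← Real.exp_mul]; ring_nf
      have h6 : Real.exp (tau * t) ≤ ((1 - t) ^ tau)⁻¹ := by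
        rw [← neg_neg (tau * t), Real.exp_neg]
        exact inv_anti₀ (by positivity) h5
      linarith [Real.add_one_le_exp (tau * t)]
    rw [e2, norm_mul, norm_neg, Complex.norm_real, Real.norm_eq_abs, mul_assoc]
    gcongr
    exact e3.trans (le_abs_self _)
  calc _ = (1/2) * ((‖q‖ * tau * t) ^ m * (‖g (-q)‖ / 2)) := by rw [mul_pow _ t]; ring
    _ ≤ _ := by gcongr

theorem fpart_bad (lam sig tau : ℝ) (hlam : 0 < lam) (hsig : 0 < sig) (htau : 0 < tau) (p q a b : ℂ)
    (hp : p ≠ 0) (hq : q ≠ 0) (s1 : ℂ) (hs1 : 0 < s1.re) (hs1c : s1 ^ (lam:ℂ) = -p) (n : ℕ)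
    (h : IntegrableOn (fun t : ℝ => (t:ℂ) ^ n * fpart lam sig tau p q a b t) (Ioo 0 1)) : False := by
  obtain ⟨m, k, d, hk, hd, hd1, hlow⟩ := gpart_lower lam tau hlam htau q b hq
  set M : ℝ := n + a.re + m with hM
  have hmc := mly_contOn lam hlam (-p)
  have h1 : IntegrableOn (fun t : ℝ => t ^ M * ‖mly lam (-p) (t ^ (-sig / lam))‖) (Ioo 0 d) := by
    have h2 := ((h.mono_set (Ioo_subset_Ioo_right hd1.le)).norm).const_mul k⁻¹
    refine Integrable.mono' h2 ?_ ?_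
    · refine Measurable.aestronglyMeasurable ?_
      have m1 : Measurable (fun t : ℝ => t ^ M) := measurable_id.pow_const M
      have m2 : Measurable (fun t : ℝ => t ^ (-sig / lam)) := measurable_id.pow_const _
      exact m1.mul (hmc.measurable.comp m2).norm
    · filter_upwards [ae_restrict_mem measurableSet_Ioo] with t ht
      have ht0 : 0 < t := ht.1
      have h3 := hlow t ht0 ht.2
      unfold fpart
      rw [Real.norm_of_nonneg (show 0 ≤ t ^ M * ‖mly lam (-p) (t ^ (-sig / lam))‖ by positivity),
        norm_mul, norm_mul, norm_mul, norm_pow, norm_tpow t ht0, mlE_eq_mly lam sig hlam p t ht0,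
        Complex.norm_real, Real.norm_of_nonneg ht0.le]
      have e1 : t ^ M = t ^ n * t ^ a.re * t ^ m := by
        rw [hM, Real.rpow_add ht0, Real.rpow_add ht0, Real.rpow_natCast, Real.rpow_natCast]
      calc t ^ M * ‖mly lam (-p) (t ^ (-sig / lam))‖
          = k⁻¹ * (t ^ n * (t ^ a.re * ‖mly lam (-p) (t ^ (-sig / lam))‖ * (k * t ^ m))) := by
            rw [e1]; field_simp
        _ ≤ _ := by gcongr
  set F : ℝ → ℝ := (Ioo 0 d).indicator (fun t : ℝ => t ^ M * ‖mly lam (-p) (t ^ (-sig / lam))‖) with hF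
  have hFi : IntegrableOn F (Ioi 0) := by
    have : Integrable F := by rw [hF, integrable_indicator_iff measurableSet_Ioo]; exact h1
    exact this.integrableOn
  set r : ℝ := -lam / sig with hr
  have hr0 : r < 0 := by rw [hr, neg_div]; have : 0 < lam / sig := by positivity
                         linarith
  have h4 := (integrableOn_Ioi_comp_rpow_iff F hr0.ne).2 hFi
  have hb : 0 < d ^ (1 / r) := by positivity
  have h5 := (h4.mono_set (Ioi_subset_Ioi hb.le)).const_mul |r|⁻¹
  refine mly_bad lam hlam (-p) (neg_ne_zero.2 hp) s1 hs1 hs1c (-(r - 1 + r * M)) (d ^ (1 / r)) hb ?_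
  refine IntegrableOn.congr_fun h5 ?_ measurableSet_Ioi
  intro u hu
  have hu1 : d ^ (1 / r) < u := hu
  have hu0 : 0 < u := hb.trans hu1
  have hmem : u ^ r ∈ Ioo 0 d := by
    refine ⟨by positivity, ?_⟩
    have := Real.rpow_lt_rpow_of_neg hb hu1 hr0
    rwa [← Real.rpow_mul hd.le, one_div_mul_cancel hr0.ne, Real.rpow_one] at this
  simp only [hF, smul_eq_mul]
  rw [indicator_of_mem hmem, ← Real.rpow_mul hu0.le, ← Real.rpow_mul hu0.le, neg_neg,
    Real.rpow_add hu0]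
  have e2 : r * (-sig / lam) = 1 := by rw [hr]; field_simp
  rw [e2, Real.rpow_one]
  have : |r| ≠ 0 := abs_ne_zero.2 hr0.ne
  field_simp

theorem fpart_dich (lam sig tau : ℝ) (hlam : 0 < lam) (hsig : 0 < sig) (htau : 0 < tau) (p q a b : ℂ)
    (ha : -1 < a.re) (hp : p ≠ 0) (hq : q ≠ 0) :
    IntegrableOn (fpart lam sig tau p q a b) (Ioo 0 1) ∨
      ∀ n : ℕ, ¬ IntegrableOn (fun t : ℝ => (t:ℂ) ^ n * fpart lam sig tau p q a b t) (Ioo 0 1) := by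
  rcases dichotomy lam hlam (-p) (neg_ne_zero.2 hp) with ⟨K, w0, hP⟩ | ⟨s1, hs1, hs1c⟩
  · by_contra hcon
    push Not at hcon
    obtain ⟨hno, n, hn⟩ := hcon
    apply hno
    have h1 := fpart_good lam sig tau hlam hsig p q a b ha hp K w0 hP
    have hsub : Ioo (1/2:ℝ) 1 ⊆ Ioo 0 1 := Ioo_subset_Ioo_left (by norm_num)
    have h2 : IntegrableOn (fpart lam sig tau p q a b) (Ioo (1/2) 1) := by
      refine Integrable.mono' (((hn.mono_set hsub).norm).const_mul (2 ^ n))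
        (((fpart_cont lam sig tau hlam p q a b).mono hsub).aestronglyMeasurable measurableSet_Ioo) ?_
      filter_upwards [ae_restrict_mem measurableSet_Ioo] with t ht
      have ht0 : 1 / 2 < t := ht.1
      rw [norm_mul, norm_pow, Complex.norm_real, Real.norm_of_nonneg (by linarith), ← mul_assoc,
        ← mul_pow]
      have : 1 ≤ (2 * t) ^ n := one_le_pow₀ (by linarith)
      exact le_mul_of_one_le_left (norm_nonneg _) this
    rw [← Ioc_union_Ioo_eq_Ioo (b := 1/2) (by norm_num) (by norm_num)]
    exact h1.union h2
  · exact Or.inr fun n hn => fpart_bad lam sig tau hlam hsig htau p q a b hp hq s1 hs1 hs1c n hn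


theorem extPhi_integral_repr (lam sig tau : ℝ) (hlam : 0 < lam) (hsig : 0 < sig)
    (htau : 0 < tau) (p q e2 e3 z : ℂ) (hp : 0 < p.re) (hq : 0 < q.re)
    (he2 : 0 < e2.re) (he23 : e2.re < e3.re) :
    extPhi lam sig tau p q e2 e3 z
      = 1 / Complex.betaIntegral e2 (e3 - e2) *
          ∫ t in Ioo (0:ℝ) 1,
            (t : ℂ) ^ (e2 - 1) * (1 - (t : ℂ)) ^ (e3 - e2 - 1) * Complex.exp (z * t) *
              mlE lam (-p / (t : ℂ) ^ (sig : ℂ)) *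
              mlE lam (-q / (1 - (t : ℂ)) ^ (tau : ℂ)) := by
  have hp0 : p ≠ 0 := by rintro rfl; simp at hp
  have hq0 : q ≠ 0 := by rintro rfl; simp at hq
  set f : ℝ → ℂ := fpart lam sig tau p q (e2 - 1) (e3 - e2 - 1) with hf
  have hbeta : ∀ n : ℕ, extBeta lam sig tau p q (e2 + n) (e3 - e2) =
      ∫ t in Ioo (0:ℝ) 1, (t:ℂ) ^ n * f t := by
    intro n
    unfold extBeta
    refine setIntegral_congr_fun measurableSet_Ioo fun t ht => ?_
    have ht0 : (t:ℂ) ≠ 0 := by exact_mod_cast ht.1.ne'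
    have e1 : e2 + n - 1 = (e2 - 1) + n := by ring
    simp only [hf, fpart, gpart]
    rw [e1, Complex.cpow_add _ _ ht0, Complex.cpow_natCast]
    ring
  have hrhs : ∫ t in Ioo (0:ℝ) 1,
            (t : ℂ) ^ (e2 - 1) * (1 - (t : ℂ)) ^ (e3 - e2 - 1) * Complex.exp (z * t) *
              mlE lam (-p / (t : ℂ) ^ (sig : ℂ)) *
              mlE lam (-q / (1 - (t : ℂ)) ^ (tau : ℂ)) =
      ∫ t in Ioo (0:ℝ) 1, f t * Complex.exp (z * t) := by
    refine setIntegral_congr_fun measurableSet_Ioo fun t ht => ?_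
    simp only [hf, fpart, gpart]
    ring
  rw [hrhs]
  unfold extPhi
  simp only [hbeta]
  rcases fpart_dich lam sig tau hlam hsig htau p q (e2 - 1) (e3 - e2 - 1) (by simpa using he2) hp0 hq0
    with hInt | hno
  · have hmeas := hInt.aestronglyMeasurable
    let F : ℕ → ℝ → ℂ := fun n t => (z ^ n / (Nat.factorial n : ℂ)) * ((t:ℂ) ^ n * f t)
    have hle : ∀ n : ℕ, ∀ t ∈ Ioo (0:ℝ) 1, ‖(t:ℂ) ^ n * f t‖ ≤ ‖f t‖ := by
      intro n t ht
      rw [norm_mul, norm_pow, Complex.norm_real, Real.norm_of_nonneg ht.1.le]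
      exact mul_le_of_le_one_left (norm_nonneg _) (pow_le_one₀ ht.1.le ht.2.le)
    have hti : ∀ n : ℕ, IntegrableOn (fun t : ℝ => (t:ℂ) ^ n * f t) (Ioo 0 1) := by
      intro n
      refine Integrable.mono hInt
        ((Continuous.aestronglyMeasurable (by fun_prop)).mul hmeas) ?_
      filter_upwards [ae_restrict_mem measurableSet_Ioo] with t ht
      exact hle n t ht
    have hFi : ∀ n, Integrable (F n) (volume.restrict (Ioo 0 1)) := fun n => (hti n).const_mul _
    have hsum := hasSum_integral_of_summable_integral_norm hFi (by
      refine Summable.of_nonneg_of_le (fun n => by positivity) (fun n => ?_)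
        ((Real.summable_pow_div_factorial ‖z‖).mul_right (∫ t in Ioo (0:ℝ) 1, ‖f t‖))
      simp only [F, norm_mul]
      rw [integral_const_mul, norm_div, norm_pow, Complex.norm_natCast]
      refine mul_le_mul_of_nonneg_left ?_ (by positivity)
      refine setIntegral_mono_on ?_ hInt.norm measurableSet_Ioo ?_
      · have := (hti n).norm
        simp only [norm_mul] at this
        exact this
      · intro t ht
        have := hle n t ht
        rwa [norm_mul] at this)
    have htsum : ∫ t in Ioo (0:ℝ) 1, ∑' n, F n t = ∫ t in Ioo (0:ℝ) 1, f t * Complex.exp (z * t) := by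
      refine setIntegral_congr_fun measurableSet_Ioo fun t ht => ?_
      simp only [F]
      have h1 := NormedSpace.expSeries_div_hasSum_exp (z * (t:ℂ))
      rw [← Complex.exp_eq_exp_ℂ] at h1
      have h2 := (h1.mul_left (f t)).tsum_eq
      rw [← h2]
      congr 1
      ext n
      rw [mul_pow]; ring
    rw [htsum] at hsum
    have h3 := (hsum.mul_left (1 / Complex.betaIntegral e2 (e3 - e2))).tsum_eq
    rw [← h3]
    congr 1
    ext n
    simp only [F]
    rw [integral_const_mul]
    ring
  · have h1 : ∀ n : ℕ, ∫ t in Ioo (0:ℝ) 1, (t:ℂ) ^ n * f t = 0 := fun n => integral_undef (hno n)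
    have h2 : ∫ t in Ioo (0:ℝ) 1, f t * Complex.exp (z * t) = 0 := by
      refine integral_undef fun hi => hno 0 ?_
      have h3 : IntegrableOn (fun t : ℝ => (f t * Complex.exp (z * t)) * Complex.exp (-(z * t))) (Ioo 0 1) := by
        refine Integrable.mul_bdd (c := Real.exp ‖z‖) hi (Continuous.aestronglyMeasurable (by fun_prop)) ?_
        filter_upwards [ae_restrict_mem measurableSet_Ioo] with t ht
        rw [Complex.norm_exp]
        gcongr
        refine (Complex.re_le_norm _).trans ?_
        rw [norm_neg, norm_mul, Complex.norm_real, Real.norm_of_nonneg ht.1.le]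
        exact mul_le_of_le_one_right (norm_nonneg _) ht.2.le
      refine h3.congr (ae_of_all _ fun t => ?_)
      simp only
      rw [mul_assoc, ← Complex.exp_add, add_neg_cancel, Complex.exp_zero, mul_one, pow_zero, one_mul]
    simp only [h1, h2]
    simp
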